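/- Let G = (V,E) be a finite simple graph with |V| ≥ 3 and set λ = 3|V|³. Then V admits a partition into three nonempty parts each inducing a clique in G if and only if there exist nonempty subsets V_1, V_2, V_3 ⊆ V with r(V_1, V_2, V_3) ≥ (|V| - 3)/2 + 18|V|³. -/

import Mathlib

open Finset

/-- The number of edges of `G` with both endpoints in `U`. -/
noncomputable def edgeCount {V : Type*} (G : SimpleGraph V) (U : Finset V) : ℕ :=
  Set.ncard {e : Sym2 V | e ∈ G.edgeSet ∧ ∀ v ∈ e, v ∈ U}

/-- The density of the subgraph of `G` induced by `U`. -/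
noncomputable def dens {V : Type*} (G : SimpleGraph V) (U : Finset V) : ℝ :=
  (edgeCount G U : ℝ) / U.card

/-- The distance between two finite sets used in the paper. -/
noncomputable def ddist {α : Type*} [DecidableEq α] (U Z : Finset α) : ℝ :=
  if U = Z then 0 else 2 - ((U ∩ Z).card : ℝ) ^ 2 / ((U.card : ℝ) * (Z.card : ℝ))

/-- The objective function of Top-3-Overlapping Densest Subgraphs for a triple. -/
noncomputable def rval3 {V : Type*} [DecidableEq V] (G : SimpleGraph V) (lam : ℝ)
    (W₁ W₂ W₃ : Finset V) : ℝ :=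
  dens G W₁ + dens G W₂ + dens G W₃ +
    lam * (ddist W₁ W₂ + ddist W₁ W₃ + ddist W₂ W₃)

/-!
A nonempty set `U` has density at most `(|U| - 1) / 2`, with equality exactly when it is a clique,
and two sets are at distance at most `2`, with equality exactly when they are disjoint. For `k`
pairwise disjoint sets the distance part of the objective is therefore maximal, and the density
part is at most `(∑ |Wᵢ| - k) / 2 ≤ (|V| - k) / 2`, with equality exactly for clique partitions.
A single intersecting pair costs at least `λ / |V|²` in the distance part, while the density part
never exceeds `(|V| - k) / 2` by more than `(k - 1) |V| / 2`; so once `λ > (k - 1) |V|³ / 2`, only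
pairwise disjoint families can reach the value of a clique partition.
-/

section Density

variable {V : Type*} {G : SimpleGraph V} {U : Finset V}

lemma edgeCount_top (U : Finset V) : edgeCount ⊤ U = (#U).choose 2 := by
  classical
  have edges_eq : {e : Sym2 V | e ∈ (⊤ : SimpleGraph V).edgeSet ∧ ∀ v ∈ e, v ∈ U} =
      ↑{e ∈ U.sym2 | ¬ e.IsDiag} := by
    ext e
    simp [and_comm]
  rw [edgeCount, edges_eq, Set.ncard_coe_finset, sym2_eq_image,
    Sym2.filter_image_mk_not_isDiag, Sym2.card_image_offDiag]

lemma finite_setOf_mem_edgeSet_and_forall_mem (G : SimpleGraph V) (U : Finset V) :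
    {e : Sym2 V | e ∈ G.edgeSet ∧ ∀ v ∈ e, v ∈ U}.Finite :=
  U.sym2.finite_toSet.subset fun _ he ↦ mem_sym2_iff.2 he.2

lemma edgeCount_mono {H : SimpleGraph V} (hGH : G ≤ H) (U : Finset V) :
    edgeCount G U ≤ edgeCount H U :=
  Set.ncard_le_ncard (fun _ he ↦ ⟨SimpleGraph.edgeSet_mono hGH he.1, he.2⟩)
    (finite_setOf_mem_edgeSet_and_forall_mem H U)

lemma edgeCount_le_choose_two (G : SimpleGraph V) (U : Finset V) :
    edgeCount G U ≤ (#U).choose 2 :=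
  (edgeCount_mono le_top U).trans_eq (edgeCount_top U)

lemma edgeCount_eq_choose_two_iff : edgeCount G U = (#U).choose 2 ↔ G.IsClique (U : Set V) := by
  rw [← edgeCount_top]
  constructor
  · intro hcard a ha b hb hab
    have edges_eq : {e | e ∈ G.edgeSet ∧ ∀ v ∈ e, v ∈ U} =
        {e | e ∈ (⊤ : SimpleGraph V).edgeSet ∧ ∀ v ∈ e, v ∈ U} :=
      Set.eq_of_subset_of_ncard_le (fun _ he ↦ ⟨SimpleGraph.edgeSet_mono le_top he.1, he.2⟩)
        hcard.ge (finite_setOf_mem_edgeSet_and_forall_mem ⊤ U)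
    exact (edges_eq.ge (show s(a, b) ∈ _ from ⟨hab, by simpa using ⟨ha, hb⟩⟩)).1
  · intro hclique
    refine congrArg Set.ncard (Set.ext fun e ↦ and_congr_left fun hU ↦ ?_)
    induction e with | _ a b =>
    exact ⟨SimpleGraph.Adj.ne, hclique (hU a (Sym2.mem_mk_left a b)) (hU b (Sym2.mem_mk_right a b))⟩

lemma dens_le (G : SimpleGraph V) (hU : U.Nonempty) : dens G U ≤ ((#U : ℝ) - 1) / 2 := by
  have hpos : (0 : ℝ) < #U := mod_cast hU.card_pos
  have hle : (edgeCount G U : ℝ) ≤ (#U).choose 2 := mod_cast edgeCount_le_choose_two G U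
  rw [Nat.cast_choose_two] at hle
  rw [_root_.dens, div_le_iff₀ hpos]
  linarith

lemma dens_eq_iff (hU : U.Nonempty) : dens G U = ((#U : ℝ) - 1) / 2 ↔ G.IsClique (U : Set V) := by
  have hne : (#U : ℝ) ≠ 0 := mod_cast hU.card_ne_zero
  rw [← edgeCount_eq_choose_two_iff, ← Nat.cast_inj (R := ℝ), Nat.cast_choose_two, _root_.dens,
    div_eq_iff hne, mul_comm (#U : ℝ), mul_div_right_comm]

end Density

section Distance

variable {α : Type*} [DecidableEq α] {U Z : Finset α}

lemma ddist_comm (U Z : Finset α) : ddist U Z = ddist Z U := by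
  simp only [ddist, eq_comm, inter_comm, mul_comm]

lemma ddist_le_two (U Z : Finset α) : ddist U Z ≤ 2 := by
  unfold ddist
  split_ifs
  · norm_num
  · exact sub_le_self _ (by positivity)

lemma ddist_eq_two_of_disjoint (hU : U.Nonempty) (h : Disjoint U Z) : ddist U Z = 2 := by
  have hne : U ≠ Z := h.ne hU.ne_empty
  simp [ddist, hne, disjoint_iff_inter_eq_empty.1 h]

lemma ddist_le_of_not_disjoint (h : ¬ Disjoint U Z) :
    ddist U Z ≤ 2 - 1 / ((#U : ℝ) * #Z) := by
  have hinter : 1 ≤ #(U ∩ Z) := (not_disjoint_iff_nonempty_inter.1 h).card_pos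
  have hU : 1 ≤ #U := hinter.trans (card_le_card inter_subset_left)
  have hZ : 1 ≤ #Z := hinter.trans (card_le_card inter_subset_right)
  unfold ddist
  split_ifs
  · have hprod : (1 : ℝ) ≤ #U * #Z := mod_cast Nat.mul_le_mul hU hZ
    linarith [(div_le_one₀ (by positivity)).2 hprod]
  · gcongr
    exact_mod_cast Nat.one_le_pow _ _ hinter

lemma ddist_le_of_not_disjoint_of_fintype [Fintype α] (h : ¬ Disjoint U Z) :
    ddist U Z ≤ 2 - 1 / (Fintype.card α : ℝ) ^ 2 := by
  have hinter : (U ∩ Z).Nonempty := not_disjoint_iff_nonempty_inter.1 h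
  have hU : 0 < #U := (hinter.mono inter_subset_left).card_pos
  have hZ : 0 < #Z := (hinter.mono inter_subset_right).card_pos
  refine (ddist_le_of_not_disjoint h).trans ?_
  rw [sq]
  gcongr <;> exact card_le_univ _

end Distance

section Families

variable {V : Type*} {k : ℕ}

/-- A partition of the vertex set into `k` nonempty labelled parts, each inducing a clique. -/
structure IsCliquePartition (G : SimpleGraph V) (W : Fin k → Finset V) : Prop where
  nonempty : ∀ i, (W i).Nonempty
  disjoint : Pairwise fun i j ↦ Disjoint (W i) (W j)
  cover : ∀ v, ∃ i, v ∈ W i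
  isClique : ∀ i, G.IsClique (W i : Set V)

/-- The sum of the distances over all unordered pairs of members of a family, each pair being
counted once through its increasing pair of indices. -/
noncomputable def totalDist [DecidableEq V] (W : Fin k → Finset V) : ℝ :=
  ∑ p : Fin k × Fin k with p.1 < p.2, ddist (W p.1) (W p.2)

/-- The objective function of Top-`k`-Overlapping Densest Subgraphs; `rval3` is the case `k = 3`. -/
noncomputable def rval [DecidableEq V] (G : SimpleGraph V) (lam : ℝ) (W : Fin k → Finset V) : ℝ :=
  ∑ i, dens G (W i) + lam * totalDist W

variable {G : SimpleGraph V} {W : Fin k → Finset V}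

lemma sum_dens_le (G : SimpleGraph V) (hW : ∀ i, (W i).Nonempty) :
    ∑ i, dens G (W i) ≤ (∑ i, (#(W i) : ℝ) - k) / 2 :=
  calc ∑ i, dens G (W i) ≤ ∑ i, ((#(W i) : ℝ) - 1) / 2 := sum_le_sum fun i _ ↦ dens_le G (hW i)
    _ = (∑ i, (#(W i) : ℝ) - k) / 2 := by simp [← sum_div]

lemma sum_dens_eq_iff (hW : ∀ i, (W i).Nonempty) :
    ∑ i, dens G (W i) = (∑ i, (#(W i) : ℝ) - k) / 2 ↔ ∀ i, G.IsClique (W i : Set V) := by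
  have hsum : (∑ i, (#(W i) : ℝ) - k) / 2 = ∑ i, ((#(W i) : ℝ) - 1) / 2 := by simp [← sum_div]
  rw [hsum, sum_eq_sum_iff_of_le fun i _ ↦ dens_le G (hW i)]
  simp only [mem_univ, true_imp_iff, dens_eq_iff (hW _)]

lemma sum_card_le_card_of_disjoint [Fintype V]
    (hdisj : Pairwise fun i j ↦ Disjoint (W i) (W j)) : ∑ i, #(W i) ≤ Fintype.card V := by
  classical
  rw [← card_biUnion (hdisj.set_pairwise _)]
  exact card_le_univ _

lemma sum_card_eq_card_iff_of_disjoint [Fintype V]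
    (hdisj : Pairwise fun i j ↦ Disjoint (W i) (W j)) :
    ∑ i, #(W i) = Fintype.card V ↔ ∀ v, ∃ i, v ∈ W i := by
  classical
  rw [← card_biUnion (hdisj.set_pairwise _), card_eq_iff_eq_univ, eq_univ_iff_forall]
  simp only [mem_biUnion, mem_univ, true_and]

lemma le_sum_dens_iff_of_disjoint [Fintype V] (hW : ∀ i, (W i).Nonempty)
    (hdisj : Pairwise fun i j ↦ Disjoint (W i) (W j)) :
    ((Fintype.card V : ℝ) - k) / 2 ≤ ∑ i, dens G (W i) ↔
      (∀ v, ∃ i, v ∈ W i) ∧ ∀ i, G.IsClique (W i : Set V) := by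
  have hdens := sum_dens_le G hW
  have hcard : ∑ i, (#(W i) : ℝ) ≤ Fintype.card V := mod_cast sum_card_le_card_of_disjoint hdisj
  rw [← sum_card_eq_card_iff_of_disjoint hdisj, ← sum_dens_eq_iff hW, ← Nat.cast_inj (R := ℝ),
    Nat.cast_sum]
  constructor
  · intro hle
    constructor <;> linarith
  · rintro ⟨hcard_eq, hdens_eq⟩
    rw [hdens_eq, hcard_eq]

lemma two_mul_card_filter_lt (k : ℕ) :
    2 * (#{p : Fin k × Fin k | p.1 < p.2} : ℝ) = k * (k - 1) := by
  have hcard : #{p : Fin k × Fin k | p.1 < p.2} = k.choose 2 :=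
    calc #{p : Fin k × Fin k | p.1 < p.2} = ∑ j : Fin k, #(Iio j) := by
          simp only [card_filter, Fintype.sum_prod_type_right, ← filter_gt_eq_Iio]
      _ = ∑ j ∈ range k, j := by simpa using Fin.sum_univ_eq_sum_range id k
      _ = k.choose 2 := by rw [sum_range_id, Nat.choose_two_right]
  rw [hcard, Nat.cast_choose_two]
  ring

variable [DecidableEq V]

lemma totalDist_of_disjoint (hW : ∀ i, (W i).Nonempty)
    (hdisj : Pairwise fun i j ↦ Disjoint (W i) (W j)) : totalDist W = k * (k - 1) := by
  have hpair : ∀ p ∈ ({p | p.1 < p.2} : Finset (Fin k × Fin k)), ddist (W p.1) (W p.2) = 2 :=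
    fun p hp ↦ ddist_eq_two_of_disjoint (hW p.1) (hdisj (mem_filter_univ p |>.1 hp).ne)
  rw [totalDist, sum_congr rfl hpair, sum_const, nsmul_eq_mul, mul_comm, two_mul_card_filter_lt]

lemma totalDist_le_add_ddist {i j : Fin k} (hij : i ≠ j) :
    totalDist W ≤ k * (k - 1) - 2 + ddist (W i) (W j) := by
  wlog hlt : i < j generalizing i j
  · rw [ddist_comm]
    exact this hij.symm (hij.lt_or_gt.resolve_left hlt)
  have hdefect : 2 - ddist (W i) (W j) ≤
      ∑ p : Fin k × Fin k with p.1 < p.2, (2 - ddist (W p.1) (W p.2)) :=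
    single_le_sum (f := fun p : Fin k × Fin k ↦ 2 - ddist (W p.1) (W p.2)) (a := (i, j))
      (fun p _ ↦ sub_nonneg.2 (ddist_le_two _ _)) (by simpa using hlt)
  rw [sum_sub_distrib, sum_const, nsmul_eq_mul, mul_comm, two_mul_card_filter_lt,
    ← totalDist] at hdefect
  linarith

lemma disjoint_of_le_rval [Fintype V] {lam : ℝ}
    (hlam : ((k : ℝ) - 1) * (Fintype.card V : ℝ) ^ 3 / 2 < lam) (hW : ∀ i, (W i).Nonempty)
    (hr : ((Fintype.card V : ℝ) - k) / 2 + lam * (k * (k - 1)) ≤ rval G lam W) :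
    Pairwise fun i j ↦ Disjoint (W i) (W j) := by
  intro i j hij
  by_contra hmeet
  have hn : (0 : ℝ) < Fintype.card V := mod_cast Fintype.card_pos_iff.2 ⟨(hW i).choose⟩
  set n : ℝ := (Fintype.card V : ℝ)
  have hk : (1 : ℝ) ≤ k := mod_cast i.pos
  have hlam_pos : 0 < lam := hlam.trans_le' <| by have := sub_nonneg.2 hk; positivity
  have hpenalty : (k - 1) * n / 2 < lam / n ^ 2 := by
    rw [lt_div_iff₀ (by positivity)]
    linarith
  have hdist : totalDist W ≤ k * (k - 1) - 1 / n ^ 2 := by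
    linarith [totalDist_le_add_ddist (W := W) hij, ddist_le_of_not_disjoint_of_fintype hmeet]
  have hcard : ∑ i, (#(W i) : ℝ) ≤ k * n := by
    simpa using sum_le_card_nsmul univ (fun i ↦ (#(W i) : ℝ)) n
      fun i _ ↦ Nat.cast_le.2 (card_le_univ (W i))
  have hlt : rval G lam W < (n - k) / 2 + lam * (k * (k - 1)) :=
    calc rval G lam W ≤ (k * n - k) / 2 + lam * (k * (k - 1) - 1 / n ^ 2) := by
          rw [rval]
          gcongr
          exact (sum_dens_le G hW).trans (by gcongr)
      _ = (k * n - k) / 2 + lam * (k * (k - 1)) - lam / n ^ 2 := by ring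
      _ < (n - k) / 2 + lam * (k * (k - 1)) := by linarith
  exact hr.not_gt hlt

theorem stmt_17_general [Fintype V] (G : SimpleGraph V) {lam : ℝ}
    (hlam : ((k : ℝ) - 1) * (Fintype.card V : ℝ) ^ 3 / 2 < lam) (W : Fin k → Finset V) :
    IsCliquePartition G W ↔ (∀ i, (W i).Nonempty) ∧
      ((Fintype.card V : ℝ) - k) / 2 + lam * (k * (k - 1)) ≤ rval G lam W := by
  have le_rval_iff (hW : ∀ i, (W i).Nonempty)
      (hdisj : Pairwise fun i j ↦ Disjoint (W i) (W j)) :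
      ((Fintype.card V : ℝ) - k) / 2 + lam * (k * (k - 1)) ≤ rval G lam W ↔
        (∀ v, ∃ i, v ∈ W i) ∧ ∀ i, G.IsClique (W i : Set V) := by
    rw [rval, totalDist_of_disjoint hW hdisj, add_le_add_iff_right,
      le_sum_dens_iff_of_disjoint hW hdisj]
  constructor
  · rintro ⟨hW, hdisj, hcover, hclique⟩
    exact ⟨hW, (le_rval_iff hW hdisj).2 ⟨hcover, hclique⟩⟩
  · rintro ⟨hW, hr⟩
    have hdisj := disjoint_of_le_rval hlam hW hr
    obtain ⟨hcover, hclique⟩ := (le_rval_iff hW hdisj).1 hr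
    exact ⟨hW, hdisj, hcover, hclique⟩

lemma rval_vec_three (G : SimpleGraph V) (lam : ℝ) (V₁ V₂ V₃ : Finset V) :
    rval G lam ![V₁, V₂, V₃] = rval3 G lam V₁ V₂ V₃ := by
  simp [rval, rval3, totalDist, sum_filter, Fintype.sum_prod_type, Fin.sum_univ_three, add_assoc]

lemma isCliquePartition_vec_three_iff [Fintype V] {V₁ V₂ V₃ : Finset V} :
    IsCliquePartition G ![V₁, V₂, V₃] ↔
      V₁.Nonempty ∧ V₂.Nonempty ∧ V₃.Nonempty ∧
      Disjoint V₁ V₂ ∧ Disjoint V₁ V₃ ∧ Disjoint V₂ V₃ ∧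
      V₁ ∪ V₂ ∪ V₃ = univ ∧
      G.IsClique (V₁ : Set V) ∧ G.IsClique (V₂ : Set V) ∧ G.IsClique (V₃ : Set V) := by
  have hdisj : (Pairwise fun i j ↦ Disjoint (![V₁, V₂, V₃] i) (![V₁, V₂, V₃] j)) ↔
      Disjoint V₁ V₂ ∧ Disjoint V₁ V₃ ∧ Disjoint V₂ V₃ := by
    rw [Pairwise]
    simp [Fin.forall_fin_succ, disjoint_comm, and_comm, and_left_comm, ← and_assoc]
  have hcover : (∀ v, ∃ i, v ∈ ![V₁, V₂, V₃] i) ↔ V₁ ∪ V₂ ∪ V₃ = univ := by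
    simp [eq_univ_iff_forall, Fin.exists_fin_succ]
  have hparts : IsCliquePartition G ![V₁, V₂, V₃] ↔
      (∀ i, (![V₁, V₂, V₃] i).Nonempty) ∧
      (Pairwise fun i j ↦ Disjoint (![V₁, V₂, V₃] i) (![V₁, V₂, V₃] j)) ∧
      (∀ v, ∃ i, v ∈ ![V₁, V₂, V₃] i) ∧ ∀ i, G.IsClique (![V₁, V₂, V₃] i : Set V) :=
    ⟨fun h ↦ ⟨h.nonempty, h.disjoint, h.cover, h.isClique⟩,
      fun ⟨hne, hd, hc, hcl⟩ ↦ ⟨hne, hd, hc, hcl⟩⟩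
  rw [hparts, hdisj, hcover]
  simp [Fin.forall_fin_succ, and_assoc]

end Families

/-- correctness of the reduction from 3-Clique Partition. -/
theorem stmt_17 {V : Type*} [Fintype V] [DecidableEq V]
    (G : SimpleGraph V) (hV : 3 ≤ Fintype.card V) :
    (∃ V₁ V₂ V₃ : Finset V,
      V₁.Nonempty ∧ V₂.Nonempty ∧ V₃.Nonempty ∧
      Disjoint V₁ V₂ ∧ Disjoint V₁ V₃ ∧ Disjoint V₂ V₃ ∧
      V₁ ∪ V₂ ∪ V₃ = Finset.univ ∧
      G.IsClique (V₁ : Set V) ∧ G.IsClique (V₂ : Set V) ∧ G.IsClique (V₃ : Set V)) ↔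
    (∃ V₁ V₂ V₃ : Finset V,
      V₁.Nonempty ∧ V₂.Nonempty ∧ V₃.Nonempty ∧
      rval3 G (3 * (Fintype.card V : ℝ) ^ 3) V₁ V₂ V₃ ≥
        ((Fintype.card V : ℝ) - 3) / 2 + 18 * (Fintype.card V : ℝ) ^ 3) := by
  have hlam : ((3 : ℕ) - 1 : ℝ) * (Fintype.card V : ℝ) ^ 3 / 2 < 3 * (Fintype.card V : ℝ) ^ 3 := by
    have hpos : (0 : ℝ) < (Fintype.card V : ℝ) ^ 3 := by positivity
    push_cast
    linarith
  have hthreshold : 3 * (Fintype.card V : ℝ) ^ 3 * ((3 : ℕ) * ((3 : ℕ) - 1)) =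
      18 * (Fintype.card V : ℝ) ^ 3 := by
    push_cast
    ring
  refine exists₃_congr fun V₁ V₂ V₃ ↦ ?_
  rw [← isCliquePartition_vec_three_iff, stmt_17_general G hlam, hthreshold, rval_vec_three]
  simp [Fin.forall_fin_succ, and_assoc]
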